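/- Let α ∈ (0,1), λ > 0, and T > 0. If η : [0,T] → ℝ is continuous and satisfies η(t) = 1 − (λ/Γ(α)) ∫_0^t (t−s)^(α−1) η(s) ds for every t ∈ [0,T], then η(t) = E_α(−λ t^α) for every t ∈ [0,T]; that is, the fractional initial value problem with Caputo derivative of order α, right-hand side −λη, and initial value η(0) = 1 has a unique solution, given by the Mittag-Leffler function. -/

import Mathlib

/-- The Mittag-Leffler function `E_α(x) = ∑_{k=0}^∞ x^k / Γ(αk + 1)`. -/
noncomputable def mittagLeffler (α x : ℝ) : ℝ :=
  ∑' k : ℕ, x ^ k / Real.Gamma (α * k + 1)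

/-!
Write `φ_β(t) = t^β / Γ(β + 1)` and let `I^α` be the fractional integral, so that
`I^α φ_β = φ_{α+β}` by the Beta integral. Subtracting from a solution `η` of `η = x₀ + c I^α η` the
first `n` terms of the series `∑ c^k φ_{αk} x₀` leaves a remainder `R_n` with `R_{n+1} = c I^α R_n`.
If `‖η‖ ≤ M` almost everywhere, iterating gives `‖R_n‖ ≤ M |c|^n φ_{αn}` for `n ≥ 1`, and this tends
to `0`, being a multiple of the general term of the series for `E_α(|c| t^α)`.
-/

open MeasureTheory Set Filter Topology
open scoped ENNReal Interval

theorem rpow_mul_exp_neg_le_Gamma_add_one {R y : ℝ} (hR : 0 ≤ R) (hy : 0 ≤ y) :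
    R ^ y * Real.exp (-R) ≤ Real.Gamma (y + 1) := by
  have hsub : Ioi R ⊆ Ioi 0 := Ioi_subset_Ioi hR
  have hint : IntegrableOn (fun x => Real.exp (-x) * x ^ y) (Ioi 0) := by
    simpa using Real.GammaIntegral_convergent (s := y + 1) (by positivity)
  calc R ^ y * Real.exp (-R) = ∫ x in Ioi R, R ^ y * Real.exp (-x) := by
        rw [integral_const_mul, integral_exp_neg_Ioi]
    _ ≤ ∫ x in Ioi R, Real.exp (-x) * x ^ y := by
        refine setIntegral_mono_on ((integrableOn_exp_neg_Ioi R).const_mul _)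
          (hint.mono_set hsub) measurableSet_Ioi fun x hx => ?_
        rw [mul_comm]
        gcongr
        exact hx.le
    _ ≤ ∫ x in Ioi 0, Real.exp (-x) * x ^ y := by
        refine setIntegral_mono_set hint ?_ hsub.eventuallyLE
        filter_upwards [ae_restrict_mem measurableSet_Ioi] with x hx
        exact mul_nonneg (Real.exp_pos _).le (Real.rpow_nonneg (le_of_lt hx) y)
    _ = Real.Gamma (y + 1) := by
        rw [Real.Gamma_eq_integral (by positivity), add_sub_cancel_right]

theorem summable_mittagLeffler {α : ℝ} (hα : 0 < α) (x : ℝ) :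
    Summable fun k : ℕ => x ^ k / Real.Gamma (α * k + 1) := by
  obtain ⟨c, hxc⟩ := exists_gt |x|
  have hc : 0 < c := (abs_nonneg x).trans_lt hxc
  -- As `R ^ α = c`, the bound `R ^ (αk) e ^ (-R) ≤ Γ(αk + 1)` dominates the series by
  -- a multiple of `∑ (|x| / c) ^ k`.
  set R : ℝ := c ^ α⁻¹
  have hR : 0 ≤ R := by positivity
  have hgeom : Summable fun k : ℕ => Real.exp R * (|x| / c) ^ k :=
    (summable_geometric_of_lt_one (by positivity) ((div_lt_one hc).2 hxc)).mul_left _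
  refine hgeom.of_norm_bounded fun k => ?_
  have hΓ : c ^ k * Real.exp (-R) ≤ Real.Gamma (α * k + 1) := by
    simpa [R, Real.rpow_mul hR, Real.rpow_inv_rpow hc.le hα.ne'] using
      rpow_mul_exp_neg_le_Gamma_add_one hR (y := α * k) (by positivity)
  have hlower : 0 < c ^ k * Real.exp (-R) := by positivity
  calc ‖x ^ k / Real.Gamma (α * k + 1)‖ = |x| ^ k / Real.Gamma (α * k + 1) := by
        rw [norm_div, norm_pow, Real.norm_eq_abs, Real.norm_of_nonneg (hlower.le.trans hΓ)]
    _ ≤ |x| ^ k / (c ^ k * Real.exp (-R)) := by gcongr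
    _ = Real.exp R * (|x| / c) ^ k := by
        rw [Real.exp_neg, div_pow]
        field_simp

theorem integral_sub_rpow_mul_rpow {a b t : ℝ} (ha : 0 < a) (hb : 0 < b) (ht : 0 < t) :
    ∫ s in (0 : ℝ)..t, (t - s) ^ (a - 1) * s ^ (b - 1) =
      t ^ (a + b - 1) * (Real.Gamma a * Real.Gamma b / Real.Gamma (a + b)) := by
  have hscaled := Complex.betaIntegral_scaled b a ht
  rw [Complex.betaIntegral_eq_Gamma_mul_div _ _ (by simpa using hb) (by simpa using ha)] at hscaled
  have hcast : ∫ s in (0 : ℝ)..t, (s : ℂ) ^ ((b : ℂ) - 1) * ((t : ℂ) - s) ^ ((a : ℂ) - 1) =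
      ((∫ s in (0 : ℝ)..t, (t - s) ^ (a - 1) * s ^ (b - 1) : ℝ) : ℂ) := by
    rw [← intervalIntegral.integral_ofReal]
    refine intervalIntegral.integral_congr fun s hs => ?_
    rw [uIcc_of_le ht.le] at hs
    push_cast [Complex.ofReal_cpow (sub_nonneg.2 hs.2), Complex.ofReal_cpow hs.1]
    ring
  rw [← Complex.ofReal_inj, ← hcast, hscaled]
  push_cast [Complex.ofReal_cpow ht.le, ← Complex.Gamma_ofReal]
  ring_nf

/-- The function `t ↦ t ^ β / Γ(β + 1)`, normalised so that fractional integration of order `α`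
takes index `β` to index `α + β`. -/
noncomputable def fractionalMonomial (β t : ℝ) : ℝ :=
  t ^ β / Real.Gamma (β + 1)

theorem fractionalMonomial_zero_left (t : ℝ) : fractionalMonomial 0 t = 1 := by
  simp [fractionalMonomial]

theorem continuous_fractionalMonomial {β : ℝ} (hβ : 0 ≤ β) : Continuous (fractionalMonomial β) :=
  (Real.continuous_rpow_const hβ).div_const _

theorem pow_mul_fractionalMonomial {t : ℝ} (ht : 0 ≤ t) (α c : ℝ) (k : ℕ) :
    c ^ k * fractionalMonomial (α * k) t = (c * t ^ α) ^ k / Real.Gamma (α * k + 1) := by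
  rw [fractionalMonomial, Real.rpow_mul ht, Real.rpow_natCast, mul_pow, mul_div_assoc]

theorem memLp_top_of_continuousOn {X F : Type*} [TopologicalSpace X] [MeasurableSpace X]
    [OpensMeasurableSpace X] [TopologicalSpace.PseudoMetrizableSpace X] [NormedAddCommGroup F]
    {μ : Measure X} {K : Set X} {f : X → F} (hK : IsCompact K) (hKm : MeasurableSet K)
    (hf : ContinuousOn f K) : MemLp f ∞ (μ.restrict K) := by
  obtain ⟨C, hC⟩ := hK.exists_bound_of_continuousOn hf
  exact memLp_top_of_bound (hf.aestronglyMeasurable_of_isCompact hK hKm) C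
    (ae_restrict_of_forall_mem hKm hC)

variable {E : Type*} [NormedAddCommGroup E] [NormedSpace ℝ E]

theorem intervalIntegrable_sub_rpow_smul {r t : ℝ} {f : ℝ → E} (hr : -1 < r)
    (hf : MemLp f ∞ (volume.restrict [[0, t]])) :
    IntervalIntegrable (fun s => (t - s) ^ r • f s) volume 0 t := by
  have hkernel : IntervalIntegrable (fun s => (t - s) ^ r) volume 0 t := by
    simpa using ((intervalIntegral.intervalIntegrable_rpow' (a := 0) (b := t) hr).comp_sub_left
      t).symm
  rw [intervalIntegrable_iff'] at hkernel ⊢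
  exact hkernel.smul_of_top_left hf

/-- The Riemann–Liouville fractional integral of order `α` based at `0`. -/
noncomputable def riemannLiouvilleIntegral (α : ℝ) (f : ℝ → E) (t : ℝ) : E :=
  (Real.Gamma α)⁻¹ • ∫ s in (0 : ℝ)..t, (t - s) ^ (α - 1) • f s

section riemannLiouvilleIntegral

variable {α β t : ℝ}

theorem riemannLiouvilleIntegral_sub {f g : ℝ → E} (hα : 0 < α)
    (hf : MemLp f ∞ (volume.restrict [[0, t]])) (hg : MemLp g ∞ (volume.restrict [[0, t]])) :
    riemannLiouvilleIntegral α (fun s => f s - g s) t =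
      riemannLiouvilleIntegral α f t - riemannLiouvilleIntegral α g t := by
  have hr : -1 < α - 1 := by linarith
  simp only [riemannLiouvilleIntegral, smul_sub]
  rw [intervalIntegral.integral_sub (intervalIntegrable_sub_rpow_smul hr hf)
    (intervalIntegrable_sub_rpow_smul hr hg), smul_sub]

theorem riemannLiouvilleIntegral_const_mul (α c : ℝ) (f : ℝ → ℝ) (t : ℝ) :
    riemannLiouvilleIntegral α (fun s => c * f s) t = c * riemannLiouvilleIntegral α f t := by
  simp only [riemannLiouvilleIntegral, smul_eq_mul, mul_left_comm _ c,
    intervalIntegral.integral_const_mul]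

theorem riemannLiouvilleIntegral_smul_const [CompleteSpace E] (α : ℝ) (f : ℝ → ℝ) (x : E) (t : ℝ) :
    riemannLiouvilleIntegral α (fun s => f s • x) t = riemannLiouvilleIntegral α f t • x := by
  simp only [riemannLiouvilleIntegral, ← smul_assoc, intervalIntegral.integral_smul_const]

theorem riemannLiouvilleIntegral_fractionalMonomial (hα : 0 < α) (hβ : 0 ≤ β) (ht : 0 ≤ t) :
    riemannLiouvilleIntegral α (fractionalMonomial β) t = fractionalMonomial (α + β) t := by
  rcases ht.eq_or_lt with rfl | ht
  · have hαβ : α + β ≠ 0 := by positivity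
    simp [riemannLiouvilleIntegral, fractionalMonomial, Real.zero_rpow hαβ]
  have hβ1 : 0 < β + 1 := by positivity
  have hbeta := integral_sub_rpow_mul_rpow hα hβ1 ht
  simp only [add_sub_cancel_right, ← add_assoc] at hbeta
  have hΓα := (Real.Gamma_pos_of_pos hα).ne'
  have hΓβ := (Real.Gamma_pos_of_pos hβ1).ne'
  simp only [riemannLiouvilleIntegral, fractionalMonomial, smul_eq_mul, ← mul_div_assoc,
    intervalIntegral.integral_div, hbeta]
  field_simp

theorem norm_riemannLiouvilleIntegral_le {K : ℝ} {f : ℝ → E} (hα : 0 < α) (hβ : 0 ≤ β)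
    (ht : 0 ≤ t) (hf : ∀ᵐ s, s ∈ Ioc 0 t → ‖f s‖ ≤ K * fractionalMonomial β s) :
    ‖riemannLiouvilleIntegral α f t‖ ≤ K * fractionalMonomial (α + β) t := by
  have hΓ : 0 ≤ (Real.Gamma α)⁻¹ := inv_nonneg.2 (Real.Gamma_pos_of_pos hα).le
  have hcont : Continuous fun s => K * fractionalMonomial β s :=
    continuous_const.mul (continuous_fractionalMonomial hβ)
  have hmajorant : IntervalIntegrable
      (fun s => (t - s) ^ (α - 1) * (K * fractionalMonomial β s)) volume 0 t :=
    intervalIntegrable_sub_rpow_smul (by linarith)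
      (memLp_top_of_continuousOn isCompact_uIcc measurableSet_uIcc hcont.continuousOn)
  have hbound : ∀ᵐ s, s ∈ Ioc 0 t →
      ‖(t - s) ^ (α - 1) • f s‖ ≤ (t - s) ^ (α - 1) * (K * fractionalMonomial β s) := by
    filter_upwards [hf] with s hfs hs
    have hkernel : 0 ≤ (t - s) ^ (α - 1) := Real.rpow_nonneg (sub_nonneg.2 hs.2) _
    rw [norm_smul, Real.norm_of_nonneg hkernel]
    exact mul_le_mul_of_nonneg_left (hfs hs) hkernel
  calc ‖riemannLiouvilleIntegral α f t‖
      = (Real.Gamma α)⁻¹ * ‖∫ s in (0 : ℝ)..t, (t - s) ^ (α - 1) • f s‖ := by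
        rw [riemannLiouvilleIntegral, norm_smul, Real.norm_of_nonneg hΓ]
    _ ≤ riemannLiouvilleIntegral α (fun s => K * fractionalMonomial β s) t :=
        mul_le_mul_of_nonneg_left
          (intervalIntegral.norm_integral_le_of_norm_le ht hbound hmajorant) hΓ
    _ = K * fractionalMonomial (α + β) t := by
        rw [riemannLiouvilleIntegral_const_mul,
          riemannLiouvilleIntegral_fractionalMonomial hα hβ ht]

end riemannLiouvilleIntegral

/-- What is left of `η` after subtracting the first `n` terms of the series
`∑ c ^ k * t ^ (α k) / Γ(α k + 1) • x₀`, the candidate solution of `η = x₀ + c • I^α η`. -/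
noncomputable def mittagLefflerRemainder (α c : ℝ) (x₀ : E) (η : ℝ → E) (n : ℕ) (t : ℝ) : E :=
  η t - (∑ k ∈ Finset.range n, c ^ k * fractionalMonomial (α * k) t) • x₀

section mittagLefflerRemainder

variable {α c T : ℝ} {x₀ : E} {η : ℝ → E}

theorem mittagLefflerRemainder_zero : mittagLefflerRemainder α c x₀ η 0 = η := by
  ext t
  simp [mittagLefflerRemainder]

theorem mittagLefflerRemainder_succ (n : ℕ) (t : ℝ) :
    mittagLefflerRemainder α c x₀ η (n + 1) t =
      mittagLefflerRemainder α c x₀ η n t - (c ^ n * fractionalMonomial (α * n) t) • x₀ := by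
  simp only [mittagLefflerRemainder, Finset.sum_range_succ, add_smul, sub_sub]

theorem tendsto_mittagLefflerRemainder {t : ℝ} (hα : 0 < α) (ht : 0 ≤ t) :
    Tendsto (fun n => mittagLefflerRemainder α c x₀ η n t) atTop
      (𝓝 (η t - mittagLeffler α (c * t ^ α) • x₀)) := by
  simp only [mittagLefflerRemainder, pow_mul_fractionalMonomial ht]
  exact ((summable_mittagLeffler hα _).hasSum.tendsto_sum_nat.smul_const x₀).const_sub (η t)

theorem memLp_top_mittagLefflerRemainder {K : Set ℝ} (hα : 0 ≤ α) (hK : IsCompact K)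
    (hη : MemLp η ∞ (volume.restrict K)) (n : ℕ) :
    MemLp (mittagLefflerRemainder α c x₀ η n) ∞ (volume.restrict K) := by
  have hcont : Continuous fun t =>
      (∑ k ∈ Finset.range n, c ^ k * fractionalMonomial (α * k) t) • x₀ :=
    (continuous_finsetSum _ fun k _ => continuous_const.mul
      (continuous_fractionalMonomial (by positivity))).smul continuous_const
  exact hη.sub (memLp_top_of_continuousOn hK hK.measurableSet hcont.continuousOn)

theorem mittagLefflerRemainder_succ_eq_smul_integral [CompleteSpace E] {t : ℝ} (hα : 0 < α)
    (ht : 0 ≤ t) (hη : MemLp η ∞ (volume.restrict [[0, t]]))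
    (heq : η t = x₀ + c • riemannLiouvilleIntegral α η t) (n : ℕ) :
    mittagLefflerRemainder α c x₀ η (n + 1) t =
      c • riemannLiouvilleIntegral α (mittagLefflerRemainder α c x₀ η n) t := by
  induction n with
  | zero =>
    rw [mittagLefflerRemainder_succ, mittagLefflerRemainder_zero]
    nth_rw 1 [heq]
    simp [fractionalMonomial_zero_left]
  | succ n ih =>
    have hβ : 0 ≤ α * n := by positivity
    have hterm : MemLp (fun s => (c ^ n * fractionalMonomial (α * n) s) • x₀) ∞
        (volume.restrict [[0, t]]) :=
      memLp_top_of_continuousOn isCompact_uIcc measurableSet_uIcc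
        ((continuous_const.mul (continuous_fractionalMonomial hβ)).smul
          continuous_const).continuousOn
    have hindex : α * ((n + 1 : ℕ) : ℝ) = α + α * n := by push_cast; ring
    calc mittagLefflerRemainder α c x₀ η (n + 1 + 1) t
        = c • riemannLiouvilleIntegral α (mittagLefflerRemainder α c x₀ η n) t -
            c • (c ^ n * fractionalMonomial (α + α * n) t) • x₀ := by
          rw [mittagLefflerRemainder_succ, ih, hindex, pow_succ', mul_assoc, mul_smul]
      _ = c • riemannLiouvilleIntegral α (fun s => mittagLefflerRemainder α c x₀ η n s -
            (c ^ n * fractionalMonomial (α * n) s) • x₀) t := by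
          rw [riemannLiouvilleIntegral_sub hα
              (memLp_top_mittagLefflerRemainder hα.le isCompact_uIcc hη n) hterm,
            riemannLiouvilleIntegral_smul_const, riemannLiouvilleIntegral_const_mul,
            riemannLiouvilleIntegral_fractionalMonomial hα hβ ht, smul_sub]
      _ = c • riemannLiouvilleIntegral α (mittagLefflerRemainder α c x₀ η (n + 1)) t := by
          simp only [← mittagLefflerRemainder_succ]

theorem norm_mittagLefflerRemainder_succ_le_of_ae_le [CompleteSpace E] {K t : ℝ} {n : ℕ}
    (hα : 0 < α) (ht : 0 ≤ t) (hη : MemLp η ∞ (volume.restrict [[0, t]]))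
    (heq : η t = x₀ + c • riemannLiouvilleIntegral α η t)
    (hn : ∀ᵐ s, s ∈ Ioc 0 t →
      ‖mittagLefflerRemainder α c x₀ η n s‖ ≤ K * fractionalMonomial (α * n) s) :
    ‖mittagLefflerRemainder α c x₀ η (n + 1) t‖ ≤
      |c| * (K * fractionalMonomial (α * (n + 1 : ℕ)) t) := by
  have hindex : α * ((n + 1 : ℕ) : ℝ) = α + α * n := by push_cast; ring
  rw [mittagLefflerRemainder_succ_eq_smul_integral hα ht hη heq, norm_smul, Real.norm_eq_abs,
    hindex]
  gcongr
  exact norm_riemannLiouvilleIntegral_le hα (by positivity) ht hn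

theorem norm_mittagLefflerRemainder_succ_le [CompleteSpace E] {M : ℝ} (hα : 0 < α)
    (hη : MemLp η ∞ (volume.restrict (Icc 0 T))) (hM : ∀ᵐ s, s ∈ Icc 0 T → ‖η s‖ ≤ M)
    (heq : ∀ t ∈ Icc 0 T, η t = x₀ + c • riemannLiouvilleIntegral α η t) (n : ℕ) :
    ∀ t ∈ Icc 0 T, ‖mittagLefflerRemainder α c x₀ η (n + 1) t‖ ≤
      M * (|c| ^ (n + 1) * fractionalMonomial (α * (n + 1 : ℕ)) t) := by
  have hstep (n : ℕ) (hn : ∀ᵐ s, s ∈ Icc 0 T → ‖mittagLefflerRemainder α c x₀ η n s‖ ≤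
      M * |c| ^ n * fractionalMonomial (α * n) s) (t : ℝ) (ht : t ∈ Icc 0 T) :
      ‖mittagLefflerRemainder α c x₀ η (n + 1) t‖ ≤
        M * (|c| ^ (n + 1) * fractionalMonomial (α * (n + 1 : ℕ)) t) := by
    have hsub : [[0, t]] ⊆ Icc 0 T := uIcc_of_le ht.1 ▸ Icc_subset_Icc_right ht.2
    refine (norm_mittagLefflerRemainder_succ_le_of_ae_le hα ht.1
      (hη.mono_measure (Measure.restrict_mono hsub le_rfl)) (heq t ht)
      (hn.mono fun s hs hst => hs ⟨hst.1.le, hst.2.trans ht.2⟩)).trans_eq ?_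
    ring
  induction n with
  | zero =>
    refine hstep 0 ?_
    simpa [mittagLefflerRemainder_zero, fractionalMonomial_zero_left] using hM
  | succ n ih =>
    refine hstep (n + 1) (ae_of_all _ fun s hs => ?_)
    simpa only [mul_assoc] using ih s hs

end mittagLefflerRemainder

theorem volterra_equation_unique_solution_general [CompleteSpace E] {α c T : ℝ} {x₀ : E}
    {η : ℝ → E} (hα : 0 < α) (hη : MemLp η ∞ (volume.restrict (Icc 0 T)))
    (heq : ∀ t ∈ Icc 0 T, η t = x₀ + c • riemannLiouvilleIntegral α η t) :
    ∀ t ∈ Icc 0 T, η t = mittagLeffler α (c * t ^ α) • x₀ := by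
  intro t ht
  have hM : ∀ᵐ s, s ∈ Icc 0 T → ‖η s‖ ≤ lpNorm η ∞ (volume.restrict (Icc 0 T)) :=
    (ae_restrict_iff' measurableSet_Icc).1 (ae_le_lpNorm_exponent_top hη)
  have hmajorant : Tendsto (fun n : ℕ => lpNorm η ∞ (volume.restrict (Icc 0 T)) *
      (|c| ^ n * fractionalMonomial (α * n) t)) atTop (𝓝 0) := by
    simpa only [pow_mul_fractionalMonomial ht.1, mul_zero] using
      (summable_mittagLeffler hα (|c| * t ^ α)).tendsto_atTop_zero.const_mul _
  have hremainder : Tendsto (fun n => mittagLefflerRemainder α c x₀ η (n + 1) t) atTop (𝓝 0) :=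
    squeeze_zero_norm (fun n => norm_mittagLefflerRemainder_succ_le hα hη hM heq n t ht)
      ((tendsto_add_atTop_iff_nat 1).2 hmajorant)
  exact sub_eq_zero.1 <| tendsto_nhds_unique
    ((tendsto_add_atTop_iff_nat 1).2 (tendsto_mittagLefflerRemainder hα ht.1)) hremainder

theorem volterra_equation_unique_solution (α lam T : ℝ) (hα : α ∈ Set.Ioo (0:ℝ) 1)
    (hlam : 0 < lam) (hT : 0 < T) (η : ℝ → ℝ)
    (hcont : ContinuousOn η (Set.Icc 0 T))
    (heq : ∀ t ∈ Set.Icc (0:ℝ) T,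
      η t = 1 - (lam / Real.Gamma α) *
        ∫ s in (0:ℝ)..t, (t - s) ^ (α - 1) * η s) :
    ∀ t ∈ Set.Icc (0:ℝ) T, η t = mittagLeffler α (-lam * t ^ α) := by
  simpa using volterra_equation_unique_solution_general (c := -lam) (x₀ := (1 : ℝ)) hα.1
    (memLp_top_of_continuousOn isCompact_Icc measurableSet_Icc hcont) fun t ht => by
      simp [riemannLiouvilleIntegral, heq t ht, div_eq_mul_inv, mul_assoc, sub_eq_add_neg]
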